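/- Let G be a finite group with subgroups C and U such that U is normalized by C, C ∩ U = {1}, and set H = CU ≅ C ⋉ U. Let ξ̃ be a complex character of H. Then Ind_U^G(Res_U^H ξ̃) = Σ_{φ ∈ Irr(C)} φ(1) · Ind_H^G( ξ̃ ⊗ Inf_C^H φ ), where Inf_C^H φ denotes the inflation of φ along the projection H → H/U ≅ C. -/

import Mathlib

open scoped Classical

/-!
Inducing `ξ|_U` to `G` amounts to inducing from `H = C ⋉ U` the function that is `|C| ξ` on `U` and
`0` elsewhere, since each sum over `U` in the induction formula is a sum over `H` of a function
supported on `U`. That function is `ξ` times the inflation of the regular character of `C`, so it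
remains to expand the regular character as `∑ φ(1) φ` over `Irr C`. By Maschke's theorem every
character is a linear combination of irreducible ones, and orthogonality gives the coefficients.
-/

namespace CharacterInduction

universe u

section Decomposition

variable {k : Type*} [Field k] {G : Type*} [Monoid G] {V : Type*} [AddCommGroup V] [Module k V]

lemma character_eq_add_of_isCompl [FiniteDimensional k V] {ρ : Representation k G V}
    {σ τ : Subrepresentation ρ} (hστ : IsCompl σ.toSubmodule τ.toSubmodule) :
    ρ.character = σ.toRepresentation.character + τ.toRepresentation.character := by
  ext g
  have hconj : ρ g = (Submodule.prodEquivOfIsCompl _ _ hστ).conj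
      ((σ.toRepresentation g).prodMap (τ.toRepresentation g)) := by
    ext v
    obtain ⟨⟨s, t⟩, rfl⟩ := (Submodule.prodEquivOfIsCompl _ _ hστ).surjective v
    simp [LinearEquiv.conj_apply_apply, Submodule.coe_prodEquivOfIsCompl',
      Subrepresentation.toRepresentation]
  rw [Pi.add_apply, Representation.character, hconj, LinearMap.trace_conj',
    LinearMap.trace_prodMap']
  rfl

lemma exists_isCompl_ne_top_of_not_isIrreducible [Nontrivial V] {ρ : Representation k G V}
    [ρ.IsSemisimpleRepresentation] (hρ : ¬ ρ.IsIrreducible) :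
    ∃ σ τ : Subrepresentation ρ, IsCompl σ.toSubmodule τ.toSubmodule ∧
      σ.toSubmodule ≠ ⊤ ∧ τ.toSubmodule ≠ ⊤ := by
  have : Nontrivial (Subrepresentation ρ) :=
    ⟨⊥, ⊤, fun h ↦ bot_ne_top (α := Submodule k V) (congrArg Subrepresentation.toSubmodule h)⟩
  obtain ⟨σ, hσ_bot, hσ_top⟩ : ∃ σ : Subrepresentation ρ, σ ≠ ⊥ ∧ σ ≠ ⊤ := by
    by_contra! h
    exact hρ ⟨fun σ ↦ or_iff_not_imp_left.2 (h σ)⟩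
  obtain ⟨τ, hστ⟩ := exists_isCompl σ
  have hτ_top : τ ≠ ⊤ := fun h ↦ hσ_bot (eq_bot_of_isCompl_top (h ▸ hστ))
  refine ⟨σ, τ, ?_, fun h ↦ hσ_top (Subrepresentation.toSubmodule_injective h),
    fun h ↦ hτ_top (Subrepresentation.toSubmodule_injective h)⟩
  exact .of_eq (congrArg Subrepresentation.toSubmodule hστ.inf_eq_bot)
    (congrArg Subrepresentation.toSubmodule hστ.sup_eq_top)

end Decomposition

section RegularCharacter

/-- `W` is a set of representatives for the isomorphism classes of simple objects of `FDRep k G`,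
so that `fun i ↦ (W i).character` enumerates `Irr G` without repetition. -/
structure IsSimpleRepresentatives {k G I : Type*} [Field k] [Monoid G]
    (W : I → FDRep k G) : Prop where
  simple (i : I) : CategoryTheory.Simple (W i)
  eq_of_iso (i j : I) : Nonempty (W i ≅ W j) → i = j
  exists_iso (V : FDRep k G) : CategoryTheory.Simple V → ∃ i, Nonempty (V ≅ W i)

lemma character_leftRegular {k : Type*} [Field k] {G : Type*} [Group G] [Finite G] (g : G) :
    (Representation.leftRegular k G).character g = if g = 1 then (Nat.card G : k) else 0 := by
  have := Fintype.ofFinite G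
  rw [Representation.character,
    LinearMap.trace_eq_matrix_trace k (MonoidAlgebra.basis G k)]
  by_cases h : g = 1
  · subst h; simp
  · simp [Matrix.trace, LinearMap.toMatrix_apply, MonoidAlgebra.basis, h]

variable {k : Type u} [Field k] [IsAlgClosed k] {G : Type u} [Group G]

lemma simple_of_isIrreducible [Finite G] [NeZero (Nat.card G : k)] {V : Type u} [AddCommGroup V]
    [Module k V] [FiniteDimensional k V] (ρ : Representation k G V) [ρ.IsIrreducible] :
    CategoryTheory.Simple (FDRep.of ρ) := by
  rw [FDRep.simple_iff_end_is_rank_one,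
    ← (Representation.linHom.invariantsEquivFDRepHom (FDRep.of ρ) (FDRep.of ρ)).finrank_eq,
    ← Representation.IsIrreducible.finrank_intertwiningMap_self ρ]
  exact (Representation.invariantsEquivIntertwiningMap ρ ρ).finrank_eq

lemma character_mem_span_simple [Finite G] [NeZero (Nat.card G : k)] {V : Type u} [AddCommGroup V]
    [Module k V] [FiniteDimensional k V] (ρ : Representation k G V) :
    ρ.character ∈ Submodule.span k
      {χ | ∃ W : FDRep k G, CategoryTheory.Simple W ∧ W.character = χ} := by
  induction hn : Module.finrank k V using Nat.strong_induction_on generalizing V with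
  | _ n ih =>
  rcases subsingleton_or_nontrivial V with hV | hV
  · have : ρ.character = 0 := by
      ext g
      simp [Representation.character, Subsingleton.elim (ρ g) 0]
    exact this ▸ Submodule.zero_mem _
  by_cases hρ : ρ.IsIrreducible
  · exact Submodule.subset_span ⟨FDRep.of ρ, simple_of_isIrreducible ρ, rfl⟩
  · obtain ⟨σ, τ, hστ, hσ, hτ⟩ := exists_isCompl_ne_top_of_not_isIrreducible hρ
    rw [character_eq_add_of_isCompl hστ]
    exact Submodule.add_mem _
      (ih _ (hn ▸ Submodule.finrank_lt hσ) σ.toRepresentation rfl)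
      (ih _ (hn ▸ Submodule.finrank_lt hτ) τ.toRepresentation rfl)

namespace IsSimpleRepresentatives

variable [NeZero (Nat.card G : k)] {I : Type*} {W : I → FDRep k G}

lemma character_orthonormal [Fintype G] (hW : IsSimpleRepresentatives W) (i j : I) :
    (Nat.card G : k)⁻¹ * ∑ g, (W i).character g * (W j).character g⁻¹ =
      if i = j then 1 else 0 := by
  have := invertibleOfNonzero (NeZero.ne (Nat.card G : k))
  have := hW.simple i
  have := hW.simple j
  have hiso : Nonempty (W i ≅ W j) ↔ i = j :=
    ⟨hW.eq_of_iso i j, fun h ↦ h ▸ ⟨CategoryTheory.Iso.refl _⟩⟩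
  simpa only [hiso] using FDRep.char_orthonormal (W i) (W j)

lemma character_mem_span [Finite G] (hW : IsSimpleRepresentatives W) {V : Type u}
    [AddCommGroup V] [Module k V] [FiniteDimensional k V] (ρ : Representation k G V) :
    ρ.character ∈ Submodule.span k (Set.range fun i ↦ (W i).character) := by
  refine Submodule.span_mono ?_ (character_mem_span_simple ρ)
  rintro _ ⟨V, hV, rfl⟩
  obtain ⟨i, ⟨e⟩⟩ := hW.exists_iso V hV
  exact ⟨i, (FDRep.char_iso e).symm⟩

lemma eq_sum_of_mem_span [Fintype G] [Fintype I] (hW : IsSimpleRepresentatives W) {χ : G → k}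
    (hχ : χ ∈ Submodule.span k (Set.range fun i ↦ (W i).character)) :
    χ = ∑ i, ((Nat.card G : k)⁻¹ * ∑ g, χ g * (W i).character g⁻¹) • (W i).character := by
  obtain ⟨c, rfl⟩ := (Submodule.mem_span_range_iff_exists_fun k).1 hχ
  refine Finset.sum_congr rfl fun j _ ↦ congrArg (· • _) (Eq.symm ?_)
  calc (Nat.card G : k)⁻¹ * ∑ g, (∑ i, c i • (W i).character) g * (W j).character g⁻¹
      = ∑ i, c i * ((Nat.card G : k)⁻¹ * ∑ g, (W i).character g * (W j).character g⁻¹) := by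
        simp only [Finset.sum_apply, Pi.smul_apply, smul_eq_mul, Finset.sum_mul, Finset.mul_sum]
        rw [Finset.sum_comm]
        exact Finset.sum_congr rfl fun i _ ↦ Finset.sum_congr rfl fun g _ ↦ by ring
    _ = c j := by simp only [hW.character_orthonormal, mul_ite, mul_one, mul_zero,
        Finset.sum_ite_eq', Finset.mem_univ, if_true]

lemma sum_character_one_mul_character [Finite G] [Fintype I] (hW : IsSimpleRepresentatives W)
    (g : G) :
    ∑ i, (W i).character 1 * (W i).character g = if g = 1 then (Nat.card G : k) else 0 := by
  have := Fintype.ofFinite G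
  have hcoeff (i : I) : (Nat.card G : k)⁻¹ * ∑ g, (Representation.leftRegular k G).character g *
      (W i).character g⁻¹ = (W i).character 1 := by
    simp only [character_leftRegular, ite_mul, zero_mul, Finset.sum_ite_eq', Finset.mem_univ,
      if_true, inv_one, inv_mul_cancel_left₀ (NeZero.ne (Nat.card G : k))]
  have hexpand := hW.eq_sum_of_mem_span (hW.character_mem_span (Representation.leftRegular k G))
  simp only [hcoeff] at hexpand
  simpa [character_leftRegular] using (congrFun hexpand g).symm

end IsSimpleRepresentatives

end RegularCharacter

section Induction

variable {k : Type*} [Field k] {G H U : Type*} [Group G] [Group H] [Group U]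
  [Fintype G] [Fintype H] [Fintype U]

/-- Induction of functions along a homomorphism `ι : H →* G`, injective or not, by the averaging
formula for `Ind_H^G`. It is the junk value `0` when the characteristic of `k` divides `|H|`. -/
noncomputable def inductionMap (ι : H →* G) : (H → k) →ₗ[k] (G → k) where
  toFun f g := (Fintype.card H : k)⁻¹ * ∑ x : G, ∑ h : H, if x⁻¹ * g * x = ι h then f h else 0
  map_add' f₁ f₂ := by
    ext g
    simp only [Pi.add_apply, ← mul_add, ← Finset.sum_add_distrib, ite_add_ite, add_zero]
  map_smul' c f := by
    ext g
    simp only [Pi.smul_apply, smul_eq_mul, RingHom.id_apply, mul_left_comm c, Finset.mul_sum,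
      mul_ite, mul_zero]

lemma inductionMap_comp_of_injective (ι : H →* G) {j : U →* H} (hj : Function.Injective j)
    (hindex : (j.range.index : k) ≠ 0) (f : H → k) :
    inductionMap (ι.comp j) (f ∘ j) =
      inductionMap ι fun h ↦ if h ∈ j.range then j.range.index * f h else 0 := by
  have hcard : (Fintype.card H : k) = Fintype.card U * j.range.index := by
    rw [← Nat.card_eq_fintype_card, ← Nat.card_eq_fintype_card, ← j.range.card_mul_index,
      Nat.card_congr (j.ofInjective hj).toEquiv, Nat.cast_mul]
  have hsum (g x : G) :
      (∑ h : H, if x⁻¹ * g * x = ι h then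
        if h ∈ j.range then (j.range.index : k) * f h else 0 else 0) =
      j.range.index * ∑ u : U, if x⁻¹ * g * x = ι (j u) then f (j u) else 0 := by
    rw [Finset.mul_sum]
    refine (Fintype.sum_of_injective j hj _ _ (fun h hh ↦ ?_) fun u ↦ ?_).symm
    · simp [show h ∉ j.range from hh]
    · simp
  ext g
  simp only [inductionMap, LinearMap.coe_mk, AddHom.coe_mk, hsum, ← Finset.mul_sum, hcard]
  rw [mul_inv, mul_assoc, inv_mul_cancel_left₀ hindex]
  rfl

end Induction

end CharacterInduction

open CharacterInduction in
theorem stmt_3_general.{u} {k C : Type u} [Field k] [IsAlgClosed k] [Group C] {G H U : Type*}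
    [Group G] [Group H] [Group U] [Fintype G] [Fintype H] [Fintype U] [NeZero (Nat.card H : k)]
    (ι : H →* G) {j : U →* H} (hj : Function.Injective j) {π : H →* C}
    (hπ : Function.Surjective π) (hexact : j.range = π.ker) (f : H → k)
    {I : Type*} [Fintype I] {W : I → FDRep k C} (hW : IsSimpleRepresentatives W) :
    inductionMap (ι.comp j) (f ∘ j) =
      ∑ i, (W i).character 1 • inductionMap ι (f * (W i).character ∘ π) := by
  have := Finite.of_surjective π hπ
  have hindex : j.range.index = Nat.card C := by
    rw [hexact, Subgroup.index_ker, MonoidHom.range_eq_top.2 hπ, Subgroup.card_top]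
  have hcard : NeZero (Nat.card C : k) :=
    ⟨ne_zero_of_dvd_ne_zero (NeZero.ne (Nat.card H : k))
      (Nat.cast_dvd_cast (Subgroup.card_dvd_of_surjective π hπ))⟩
  have hreg : (fun h ↦ if h ∈ j.range then (j.range.index : k) * f h else 0) =
      ∑ i, (W i).character 1 • (f * (W i).character ∘ π) := by
    ext h
    have hmem : h ∈ j.range ↔ π h = 1 := by rw [hexact, MonoidHom.mem_ker]
    calc (if h ∈ j.range then (j.range.index : k) * f h else 0)
        = f h * if π h = 1 then (Nat.card C : k) else 0 := by
          simp only [hindex, hmem, mul_ite, mul_zero, mul_comm]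
      _ = f h * ∑ i, (W i).character 1 * (W i).character (π h) := by
          rw [hW.sum_character_one_mul_character]
      _ = (∑ i, (W i).character 1 • (f * (W i).character ∘ π)) h := by
          simp [Finset.mul_sum, mul_left_comm]
  rw [inductionMap_comp_of_injective ι hj (hindex ▸ hcard.out), hreg]
  simp only [map_sum, map_smul]

/-- Decomposition of a generalized Gelfand–Graev character into Kawanaka
characters, abstract form.  Let `G` be a finite group containing `H = C ⋉ U`
(realized as a semidirect product `U ⋊[φ] C` together with an injective
homomorphism `ι` into `G`; thus `U` is normalized by `C`, `C ∩ U = 1` and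
`H = CU`).  Let `ξ̃` be a complex character of `H` and let `(W i)_{i : I}` be a
complete irredundant family of irreducible complex representations of `C`.
Then `Ind_U^G (Res_U^H ξ̃) = Σ_{φ ∈ Irr C} φ(1) · Ind_H^G (ξ̃ ⊗ Inf_C^H φ)`,
where both induced class functions are written out by the usual formula. -/
theorem stmt_3 (G : Type) [Group G] [Fintype G]
    (C U : Type) [Group C] [Group U] [Fintype C] [Fintype U]
    (φ : C →* MulAut U) [Fintype (U ⋊[φ] C)]
    (ι : U ⋊[φ] C →* G) (hι : Function.Injective ι)
    (ξ : FDRep ℂ (U ⋊[φ] C))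
    (I : Type) [Fintype I] (W : I → FDRep ℂ C)
    (hWsimple : ∀ i, CategoryTheory.Simple (W i))
    (hWinj : ∀ i j, Nonempty (W i ≅ W j) → i = j)
    (hWall : ∀ V : FDRep ℂ C, CategoryTheory.Simple V → ∃ i, Nonempty (V ≅ W i)) :
    ∀ g : G,
      (Fintype.card U : ℂ)⁻¹ *
          ∑ x : G, ∑ u : U,
            (if x⁻¹ * g * x = ι (SemidirectProduct.inl u)
              then ξ.character (SemidirectProduct.inl u) else 0) =
      ∑ i : I, (W i).character 1 *
        ((Fintype.card (U ⋊[φ] C) : ℂ)⁻¹ *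
          ∑ x : G, ∑ h : U ⋊[φ] C,
            (if x⁻¹ * g * x = ι h
              then ξ.character h * (W i).character (SemidirectProduct.rightHom h)
              else 0)) := by
  intro g
  simpa [CharacterInduction.inductionMap] using congrFun (stmt_3_general ι
    SemidirectProduct.inl_injective SemidirectProduct.rightHom_surjective
    SemidirectProduct.range_inl_eq_ker_rightHom ξ.character ⟨hWsimple, hWinj, hWall⟩) g
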